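/- (Brion–Vergne) Let P ⊂ ℝ^n be a full-dimensional simple lattice polytope, with the vertex data u_F, m_v^F, G(σ_v), χ_γ described in the context. Let z ∈ ℂ^n be such that χ_γ(m_v^F)·exp(⟨m_v^F, z⟩) ≠ 1 for every vertex v of P, every γ ∈ G(σ_v), and every F ∈ 𝓕^v. Then Σ_{m ∈ ℤ^n ∩ P} exp(⟨m,z⟩) = Σ_{v vertex of P} (exp(⟨v,z⟩)/|G(σ_v)|) · Σ_{γ ∈ G(σ_v)} Π_{F ∈ 𝓕^v} 1/(1 − χ_γ(m_v^F)·exp(⟨m_v^F, z⟩)). -/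

import Mathlib

/-!
Why the formula holds.

*One vertex.* At a vertex `v` the characters of `G(σ_v)` average to the indicator of `ℤ^n` inside
the lattice spanned by the `m_v^F`. If `Re ⟨m_v^F, z⟩ ≠ 0` for every `F`, each factor `1 / (1 - w)`
expands as a geometric series at `0` or at `∞`, so the vertex term equals, up to the sign
`(-1) ^ (number of flipped edges)`, the absolutely convergent sum of `exp ⟨m, z⟩` over the lattice
points `m` of the half-open cone obtained from the tangent cone at `v` by flipping the edges with
`Re ⟨m_v^F, z⟩ > 0`. This is `vertex_hasSum`.

*All vertices.* By the Lawrence–Varchenko decomposition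
(`SimpleData.signedCount_eq_indicator`), for any linear functional `ξ` nonzero on all edge
directions, the signed indicators of the flipped cones add up to the indicator of `P`. At a point
of `P` only the `ξ`-maximal vertex contributes, with value `1`. For a point outside `P`, each signed
indicator is expanded over the sets of facets through the vertex; since every nonempty face has
exactly one `ξ`-minimal vertex (`isMin_exists`, `isMin_unique`), the total is an alternating sum
over the faces that no longer involves `ξ` (`signedCount_eq`), so `ξ` may be replaced by a
functional larger at the point than on `P`, which makes every term vanish.
Taking `ξ = Re z` and summing over the lattice gives the theorem for `z` off the
walls `Re ⟨m_v^F, z⟩ = 0`.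

*General `z`.* Both sides are continuous in `z` where the denominators do not vanish, and
`z + t ζ` lies off all walls for small `t ≠ 0` when `ζ` is generic; let `t → 0`.
-/

open scoped Pointwise Classical
open MeasureTheory Polynomial

noncomputable section

/-- The real vector corresponding to an integer vector in `ℤ^n ⊂ ℝ^n`. -/
def intVec {n : ℕ} (m : Fin n → ℤ) : Fin n → ℝ := fun i => (m i : ℝ)

/-- `F` is a face of the polytope `P`: either `P` itself or a nonempty set of maximizers
over `P` of a linear functional. -/
def IsFaceOf {n : ℕ} (P F : Set (Fin n → ℝ)) : Prop :=
  F = P ∨ (F.Nonempty ∧ ∃ u : (Fin n → ℝ) →ₗ[ℝ] ℝ,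
    F = {x | x ∈ P ∧ ∀ p ∈ P, u p ≤ u x})

/-- The dimension of (the affine span of) a face. -/
noncomputable def faceDim {n : ℕ} (F : Set (Fin n → ℝ)) : ℕ :=
  Module.finrank ℝ (affineSpan ℝ F).direction

/-- A polytope `P ⊂ ℝ^n` is simple if every vertex (`0`-dimensional face) lies on
exactly `n` edges (`1`-dimensional faces). -/
def IsSimple {n : ℕ} (P : Set (Fin n → ℝ)) : Prop :=
  ∀ v, IsFaceOf P v → faceDim v = 0 →
    {E | IsFaceOf P E ∧ faceDim E = 1 ∧ v ⊆ E}.ncard = n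

/-- The pairing `⟨x, z⟩ = ∑ i, x i * z i` of a real vector with a complex vector,
extended complex-bilinearly. -/
def cpair {n : ℕ} (x : Fin n → ℝ) (z : Fin n → ℂ) : ℂ := ∑ i, (x i : ℂ) * z i

/-- `U(σ_v)`: the subgroup of `ℤ^n` generated by the primitive normals `u_F` of the
facets `F ∈ 𝓕^v` containing the vertex `v = x` (enumerated by `Fv x : Fin n → _`). -/
def normalLattice {n : ℕ} (u : Set (Fin n → ℝ) → (Fin n → ℤ))
    (Fv : (Fin n → ℝ) → Fin n → Set (Fin n → ℝ)) (x : Fin n → ℝ) :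
    Submodule ℤ (Fin n → ℤ) :=
  Submodule.span ℤ (Set.range fun j => u (Fv x j))

/-- The character value `χ_γ(m_v^F) = exp(2πi ⟨m_v^F, γ̃⟩)` for
`γ ∈ G(σ_v) = ℤ^n / U(σ_v)`, computed using a representative `γ̃` of `γ`. -/
noncomputable def chi {n : ℕ} (u : Set (Fin n → ℝ) → (Fin n → ℤ))
    (Fv : (Fin n → ℝ) → Fin n → Set (Fin n → ℝ))
    (m : (Fin n → ℝ) → Fin n → (Fin n → ℝ)) (x : Fin n → ℝ)
    (γ : (Fin n → ℤ) ⧸ normalLattice u Fv x) (j : Fin n) : ℂ :=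
  Complex.exp (2 * Real.pi * Complex.I *
    ∑ i, (m x j i : ℂ) * ((Quotient.out γ) i : ℂ))

/-! ### Two-sided geometric expansions -/

/-- The coefficient of `w ^ a` in the expansion of `1 / (1 - w)` at `0` (`p` false, so that
`1 / (1 - w) = ∑_{a ≥ 0} w ^ a`) or at `∞` (`p` true, so that
`1 / (1 - w) = -∑_{a < 0} w ^ a`). -/
def flipCoeff (p : Prop) (a : ℝ) : ℂ :=
  if p then (if 0 ≤ a then 0 else -1) else (if 0 ≤ a then 1 else 0)

lemma hasSum_of_eq {β : Type*} {f g : β → ℂ} {a b : ℂ} (h : HasSum f a)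
    (hf : ∀ x, g x = f x) (hb : b = a) : HasSum g b := by
  rw [hb, funext hf]
  exact h

lemma hasSum_flipCoeff (w : ℂ) (p : Prop) (h : if p then 1 < ‖w‖ else ‖w‖ < 1) :
    HasSum (fun a : ℤ => flipCoeff p (a : ℝ) * w ^ a) (1 - w)⁻¹ := by
  by_cases hp : p
  · simp only [hp, if_true] at h
    have hw0 : w ≠ 0 := by
      rintro rfl
      simp at h
      linarith
    have hw1 : w - 1 ≠ 0 := by
      intro h0
      have : w = 1 := by linear_combination h0
      simp [this] at h
    have hw1' : 1 - w ≠ 0 := by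
      intro h0
      exact hw1 (by linear_combination -h0)
    have hg := (hasSum_geometric_of_norm_lt_one (ξ := w⁻¹)
      (by rw [norm_inv]; exact inv_lt_one_of_one_lt₀ h)).mul_left (-w⁻¹)
    have hval : -w⁻¹ * (1 - w⁻¹)⁻¹ = (1 - w)⁻¹ := by
      have : 1 - w⁻¹ = (w - 1) / w := by field_simp
      rw [this]
      field_simp
      ring
    rw [hval] at hg
    have hinj : Function.Injective Int.negSucc := fun a b h => by simpa using h
    refine (hinj.hasSum_iff ?_).1 ?_
    · intro a ha
      have : 0 ≤ a := by
        by_contra hneg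
        exact ha ⟨(-a - 1).toNat, by omega⟩
      simp [flipCoeff, hp, this]
    · refine hasSum_of_eq hg (fun k => ?_) rfl
      simp [flipCoeff, hp, zpow_negSucc, pow_succ]
  · simp only [hp, if_false] at h
    have hg := hasSum_geometric_of_norm_lt_one h
    have hinj : Function.Injective (Nat.cast : ℕ → ℤ) := Nat.cast_injective
    refine (hinj.hasSum_iff ?_).1 ?_
    · intro a ha
      have : ¬ 0 ≤ a := by
        intro h0
        exact ha ⟨a.toNat, by simp [h0]⟩
      simp [flipCoeff, hp, this]
    · refine hasSum_of_eq hg (fun k => ?_) rfl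
      simp [flipCoeff, hp]

lemma hasSum_mul_prod {α β : Type*} {f : α → ℂ} {g : β → ℂ} {a b : ℂ} (hf : HasSum f a)
    (hg : HasSum g b) : HasSum (fun x : α × β => f x.1 * g x.2) (a * b) :=
  HasSum.mul hf hg (summable_mul_of_summable_norm hf.summable.norm hg.summable.norm)

lemma hasSum_pi_prod (n : ℕ) (f : Fin n → ℤ → ℂ) (s : Fin n → ℂ)
    (h : ∀ j, HasSum (f j) (s j)) :
    HasSum (fun a : Fin n → ℤ => ∏ j, f j (a j)) (∏ j, s j) := by
  induction n with
  | zero => exact hasSum_of_eq (hasSum_unique (fun _ : Fin 0 → ℤ => (1 : ℂ))) (by simp) (by simp)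
  | succ n ih =>
    have h1 := ih (fun j => f j.succ) (fun j => s j.succ) (fun j => h j.succ)
    have h2 := hasSum_mul_prod (h 0) h1
    rw [← (Fin.consEquiv (fun _ : Fin (n + 1) => ℤ)).hasSum_iff, Fin.prod_univ_succ]
    refine hasSum_of_eq h2 (fun x => ?_) rfl
    simp [Fin.consEquiv, Fin.prod_univ_succ]

/-! ### The contribution of one vertex as a lattice sum over a flipped cone -/

lemma cpair_add {n : ℕ} (x y : Fin n → ℝ) (z : Fin n → ℂ) :
    cpair (x + y) z = cpair x z + cpair y z := by
  simp [cpair, add_mul, Finset.sum_add_distrib]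

lemma cpair_sum_smul {n : ℕ} {ι : Type*} (s : Finset ι) (c : ι → ℝ) (x : ι → Fin n → ℝ)
    (z : Fin n → ℂ) :
    cpair (∑ j ∈ s, c j • x j) z = ∑ j ∈ s, (c j : ℂ) * cpair (x j) z := by
  simp only [cpair, Finset.sum_apply, Pi.smul_apply, smul_eq_mul, Complex.ofReal_sum,
    Complex.ofReal_mul, Finset.sum_mul, Finset.mul_sum]
  rw [Finset.sum_comm]
  simp [mul_assoc]

/-- A family `m` dual to `u` expands every vector in its `u`-coordinates. -/
lemma dual_expand {n : ℕ} (u : Fin n → Fin n → ℝ) (m : Fin n → Fin n → ℝ)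
    (hm : ∀ j j', (∑ i, m j i * u j' i) = if j = j' then 1 else 0) (y : Fin n → ℝ) :
    y = ∑ j, (∑ i, y i * u j i) • m j := by
  have h1 : (Matrix.of m) * (Matrix.of u).transpose = 1 := by
    ext j j'
    simp [Matrix.mul_apply, hm, Matrix.one_apply]
  have h2 := mul_eq_one_comm.1 h1
  have h3 : Matrix.vecMul y ((Matrix.of u).transpose * Matrix.of m) = y := by
    rw [h2, Matrix.vecMul_one]
  conv_lhs => rw [← h3, ← Matrix.vecMul_vecMul]
  ext i
  simp [Matrix.vecMul, dotProduct]

lemma finite_quotient {n : ℕ} (u : Fin n → Fin n → ℤ) (m : Fin n → Fin n → ℝ)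
    (hm : ∀ j j', (∑ i, m j i * (u j' i : ℝ)) = if j = j' then 1 else 0) :
    Finite ((Fin n → ℤ) ⧸ Submodule.span ℤ (Set.range u)) := by
  apply Submodule.finiteQuotientOfFreeOfRankEq
  have hli : LinearIndependent ℤ u := by
    rw [Fintype.linearIndependent_iff]
    intro g hg j
    have h1 : ∀ i, ∑ j', (g j' : ℝ) * (u j' i : ℝ) = 0 := by
      intro i
      have := congrFun hg i
      simp only [Finset.sum_apply, Pi.smul_apply, smul_eq_mul, Pi.zero_apply] at this
      exact_mod_cast this
    have h2 : ∑ j', (g j' : ℝ) * (∑ i, m j i * (u j' i : ℝ)) = 0 := by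
      simp only [Finset.mul_sum]
      rw [Finset.sum_comm]
      refine Finset.sum_eq_zero fun i _ => ?_
      have : ∑ j', (g j' : ℝ) * (m j i * (u j' i : ℝ))
          = m j i * ∑ j', (g j' : ℝ) * (u j' i : ℝ) := by
        rw [Finset.mul_sum]
        exact Finset.sum_congr rfl fun _ _ => by ring
      rw [this, h1, mul_zero]
    simp only [hm] at h2
    simpa using h2
  rw [finrank_span_eq_card hli]
  simp

/-- `exp (2πi ⟨y, k⟩)`. -/
def expPair {n : ℕ} (y : Fin n → ℝ) (k : Fin n → ℤ) : ℂ :=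
  Complex.exp (2 * Real.pi * Complex.I * ∑ i, (y i : ℂ) * (k i : ℂ))

lemma expPair_add {n : ℕ} (y : Fin n → ℝ) (k l : Fin n → ℤ) :
    expPair y (k + l) = expPair y k * expPair y l := by
  rw [expPair, expPair, expPair, ← Complex.exp_add, ← mul_add, ← Finset.sum_add_distrib]
  simp [mul_add]

lemma expPair_eq_one_of_int {n : ℕ} (y : Fin n → ℝ) (k : Fin n → ℤ) (c : ℤ)
    (h : ∑ i, y i * (k i : ℝ) = c) : expPair y k = 1 := by
  have h' : ∑ i, (y i : ℂ) * (k i : ℂ) = (c : ℂ) := by exact_mod_cast congrArg Complex.ofReal h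
  rw [expPair, h', Complex.exp_eq_one_iff]
  exact ⟨c, by ring⟩

/-- Orthogonality of characters: for `y` in the lattice dual to `⟨u_j⟩`, averaging
`exp (2πi ⟨y, ·⟩)` over `ℤ^n / ⟨u_j⟩` detects whether `y` is an integer vector. -/
lemma sum_expPair {n : ℕ} (u : Fin n → Fin n → ℤ)
    [Fintype ((Fin n → ℤ) ⧸ Submodule.span ℤ (Set.range u))]
    (y : Fin n → ℝ) (a : Fin n → ℤ) (hy : ∀ j, ∑ i, y i * (u j i : ℝ) = a j) :
    ∑ γ : (Fin n → ℤ) ⧸ Submodule.span ℤ (Set.range u), expPair y (Quotient.out γ)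
      = if (∃ k : Fin n → ℤ, y = intVec k) then
          (Nat.card ((Fin n → ℤ) ⧸ Submodule.span ℤ (Set.range u)) : ℂ) else 0 := by
  -- `expPair y` is trivial on the sublattice, hence independent of representatives
  have hN : ∀ k ∈ Submodule.span ℤ (Set.range u), ∃ c : ℤ, ∑ i, y i * (k i : ℝ) = c := by
    intro k hk
    induction hk using Submodule.span_induction with
    | mem x hx =>
      obtain ⟨j, rfl⟩ := hx
      exact ⟨a j, hy j⟩
    | zero => exact ⟨0, by simp⟩
    | add x x' _ _ h h' =>
      obtain ⟨c, hc⟩ := h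
      obtain ⟨c', hc'⟩ := h'
      refine ⟨c + c', ?_⟩
      push_cast
      rw [← hc, ← hc', ← Finset.sum_add_distrib]
      simp [mul_add]
    | smul r x _ h =>
      obtain ⟨c, hc⟩ := h
      refine ⟨r * c, ?_⟩
      push_cast
      rw [← hc, Finset.mul_sum]
      refine Finset.sum_congr rfl fun i _ => ?_
      simp
      ring
  have hout : ∀ k : Fin n → ℤ,
      expPair y (Quotient.out (Submodule.Quotient.mk k :
        (Fin n → ℤ) ⧸ Submodule.span ℤ (Set.range u))) = expPair y k := by
    intro k
    set o : Fin n → ℤ := Quotient.out (Submodule.Quotient.mk k :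
        (Fin n → ℤ) ⧸ Submodule.span ℤ (Set.range u)) with ho
    have h1 : (Submodule.Quotient.mk o : (Fin n → ℤ) ⧸ Submodule.span ℤ (Set.range u))
        = Submodule.Quotient.mk k := Quotient.out_eq _
    obtain ⟨c, hc⟩ := hN _ ((Submodule.Quotient.eq _).1 h1)
    have h2 : expPair y o = expPair y (k + (o - k)) := by congr 1; abel
    rw [h2, expPair_add, expPair_eq_one_of_int y (o - k) c hc, mul_one]
  split_ifs with hinteger
  · obtain ⟨k, rfl⟩ := hinteger
    rw [Finset.sum_congr rfl (g := fun _ => (1 : ℂ)), Finset.sum_const]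
    · simp [Nat.card_eq_fintype_card]
    · intro γ _
      exact expPair_eq_one_of_int _ _ (∑ i, k i * Quotient.out γ i) (by simp [intVec])
  · obtain ⟨k, hk⟩ : ∃ k : Fin n → ℤ, expPair y k ≠ 1 := by
      by_contra hall
      push Not at hall
      apply hinteger
      have : ∀ i, ∃ c : ℤ, y i = c := by
        intro i
        have h1 := hall (Pi.single i 1)
        rw [expPair, Complex.exp_eq_one_iff] at h1
        obtain ⟨c, hc⟩ := h1
        refine ⟨c, ?_⟩
        have h2 : ∑ i', (y i' : ℂ) * ((Pi.single i (1 : ℤ) : Fin n → ℤ) i' : ℂ) = (y i : ℂ) := by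
          rw [Finset.sum_eq_single i]
          · simp
          · intro b _ hb
            simp [Pi.single_eq_of_ne hb]
          · simp
        rw [h2, mul_comm] at hc
        have h3 := mul_right_cancel₀ Complex.two_pi_I_ne_zero hc
        exact_mod_cast h3
      choose k hk using this
      exact ⟨k, funext hk⟩
    let Q := (Fin n → ℤ) ⧸ Submodule.span ℤ (Set.range u)
    have hshift : ∑ γ : Q, expPair y (Quotient.out γ)
        = expPair y k * ∑ γ : Q, expPair y (Quotient.out γ) := by
      rw [Finset.mul_sum]
      refine (Fintype.sum_equiv (Equiv.addLeft (Submodule.Quotient.mk k : Q)) _ _ ?_).symm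
      intro γ
      obtain ⟨l, rfl⟩ := Submodule.Quotient.mk_surjective _ γ
      simp only [Equiv.coe_addLeft]
      rw [← Submodule.Quotient.mk_add, hout, hout, expPair_add]
    have h0 : (expPair y k - 1) * ∑ γ : Q, expPair y (Quotient.out γ) = 0 := by
      linear_combination -hshift
    exact (mul_eq_zero.1 h0).resolve_left (sub_ne_zero.2 hk)

/-- The contribution of one vertex `v` to the right-hand side, at a `z` off the walls
`Re ⟨m_j, z⟩ = 0`, is the signed exponential sum over the lattice points of the cone at `v` whose
edges `m_j` with `Re ⟨m_j, z⟩ > 0` have been flipped. -/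
lemma vertex_hasSum {n : ℕ} (u : Fin n → Fin n → ℤ) (m : Fin n → Fin n → ℝ)
    (hm : ∀ j j', (∑ i, m j i * (u j' i : ℝ)) = if j = j' then 1 else 0)
    (z : Fin n → ℂ) (hre : ∀ j, (cpair (m j) z).re ≠ 0) (v : Fin n → ℤ) :
    HasSum (fun y : Fin n → ℤ =>
        (∏ j, flipCoeff (0 < (cpair (m j) z).re) (∑ i, (intVec y i - intVec v i) * (u j i : ℝ)))
          * Complex.exp (cpair (intVec y) z))
      (Complex.exp (cpair (intVec v) z) /
          (Nat.card ((Fin n → ℤ) ⧸ Submodule.span ℤ (Set.range u)) : ℂ) *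
        ∑ᶠ γ : (Fin n → ℤ) ⧸ Submodule.span ℤ (Set.range u),
          ∏ j, (1 - expPair (m j) (Quotient.out γ) * Complex.exp (cpair (m j) z))⁻¹) := by
  have := finite_quotient u m hm
  have := Fintype.ofFinite ((Fin n → ℤ) ⧸ Submodule.span ℤ (Set.range u))
  set Q := (Fin n → ℤ) ⧸ Submodule.span ℤ (Set.range u) with hQ
  have hcard : (Nat.card Q : ℂ) ≠ 0 := by
    simp [Nat.card_eq_fintype_card]
  set p : Fin n → Prop := fun j => 0 < (cpair (m j) z).re with hp
  have hnorm : ∀ (k : Fin n → ℤ) (j : Fin n),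
      ‖expPair (m j) k * Complex.exp (cpair (m j) z)‖ = Real.exp (cpair (m j) z).re := by
    intro k j
    have h1 : (2 * Real.pi * Complex.I * ∑ i, (m j i : ℂ) * (k i : ℂ))
        = ((2 * Real.pi * ∑ i, m j i * (k i : ℝ) : ℝ) : ℂ) * Complex.I := by
      push_cast
      ring
    rw [norm_mul, expPair, h1, Complex.norm_exp_ofReal_mul_I, one_mul, Complex.norm_exp]
  set Y : (Fin n → ℤ) → (Fin n → ℝ) := fun a => ∑ j, (a j : ℝ) • m j with hY
  have hYu : ∀ a j, ∑ i, Y a i * (u j i : ℝ) = a j := by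
    intro a j
    simp only [hY, Finset.sum_apply, Pi.smul_apply, smul_eq_mul, Finset.sum_mul]
    rw [Finset.sum_comm]
    simp only [mul_assoc, ← Finset.mul_sum, hm]
    simp
  -- the geometric expansion for a fixed `γ`, with monomials collected
  have hγ : ∀ γ : Q, HasSum (fun a : Fin n → ℤ =>
      (∏ j, flipCoeff (p j) (a j : ℝ)) * Complex.exp (cpair (Y a) z)
        * expPair (Y a) (Quotient.out γ))
      (∏ j, (1 - expPair (m j) (Quotient.out γ) * Complex.exp (cpair (m j) z))⁻¹) := by
    intro γ
    have h1 := hasSum_pi_prod n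
      (fun j (b : ℤ) => flipCoeff (p j) (b : ℝ) *
        (expPair (m j) (Quotient.out γ) * Complex.exp (cpair (m j) z)) ^ b) _
      (fun j => hasSum_flipCoeff _ (p j) (by
        rw [hnorm]
        split_ifs with h
        · exact Real.one_lt_exp_iff.2 h
        · exact Real.exp_lt_one_iff.2 (lt_of_le_of_ne (not_lt.1 h) (hre j))))
    refine hasSum_of_eq h1 (fun a => ?_) rfl
    rw [Finset.prod_mul_distrib, mul_assoc]
    congr 1
    have h2 : ∀ k : Fin n → ℤ, expPair (Y a) k = ∏ j, expPair (m j) k ^ (a j) := by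
      intro k
      simp only [expPair, ← Complex.exp_int_mul, ← Complex.exp_sum]
      congr 1
      have := cpair_sum_smul Finset.univ (fun j => (a j : ℝ)) m (fun i => (k i : ℂ))
      simp only [cpair] at this
      simp only [hY]
      rw [this, Finset.mul_sum]
      refine Finset.sum_congr rfl fun j _ => ?_
      push_cast
      ring
    have h3 : Complex.exp (cpair (Y a) z) = ∏ j, Complex.exp (cpair (m j) z) ^ (a j) := by
      simp only [← Complex.exp_int_mul, ← Complex.exp_sum, hY, cpair_sum_smul]
      simp
    rw [h2, h3, mul_comm, ← Finset.prod_mul_distrib]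
    exact Finset.prod_congr rfl fun j _ => (mul_zpow _ _ _).symm
  have hsum := (hasSum_sum (s := Finset.univ) fun γ _ => hγ γ).mul_left ((Nat.card Q : ℂ)⁻¹)
  -- averaging over `γ` keeps only the exponents `a` with `Y a` an integer vector
  have hsum2 : HasSum (fun a : Fin n → ℤ => if (∃ k : Fin n → ℤ, Y a = intVec k) then
      (∏ j, flipCoeff (p j) (a j : ℝ)) * Complex.exp (cpair (Y a) z) else 0)
      ((Nat.card Q : ℂ)⁻¹ * ∑ γ : Q,
        ∏ j, (1 - expPair (m j) (Quotient.out γ) * Complex.exp (cpair (m j) z))⁻¹) := by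
    refine hasSum_of_eq hsum (fun a => ?_) rfl
    rw [← Finset.mul_sum, sum_expPair u (Y a) a (hYu a)]
    split_ifs
    · field_simp
      rfl
    · simp
  -- reindexing by the integer vector `Y a` itself
  set A : (Fin n → ℤ) → (Fin n → ℤ) := fun y j => ∑ i, y i * u j i with hA
  have hYA : ∀ y, Y (A y) = intVec y := by
    intro y
    rw [dual_expand (fun j i => (u j i : ℝ)) m hm (intVec y)]
    simp [hY, hA, intVec]
  have hinj : Function.Injective A := by
    intro y y' h
    have : intVec y = intVec y' := by rw [← hYA, ← hYA, h]
    funext i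
    have := congrFun this i
    simpa [intVec] using this
  have hsum3 := (hinj.hasSum_iff (f := fun a : Fin n → ℤ =>
      if (∃ k : Fin n → ℤ, Y a = intVec k) then
      (∏ j, flipCoeff (p j) (a j : ℝ)) * Complex.exp (cpair (Y a) z) else 0) (by
    intro a ha
    rw [if_neg]
    rintro ⟨k, hk⟩
    apply ha
    refine ⟨k, funext fun j => ?_⟩
    have := hYu a j
    rw [hk] at this
    simp only [intVec] at this
    simp only [hA]
    exact_mod_cast this)).2 hsum2
  have hsum4 := (((Equiv.subRight v).hasSum_iff).2 hsum3).mul_left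
    (Complex.exp (cpair (intVec v) z))
  rw [finsum_eq_sum_of_fintype]
  refine hasSum_of_eq hsum4 (fun y => ?_) ?_
  · simp only [Function.comp, Equiv.subRight_apply, hYA]
    rw [if_pos ⟨_, rfl⟩]
    have h1 : intVec y = intVec v + intVec (y - v) := by
      funext i
      simp [intVec]
    rw [mul_left_comm, ← Complex.exp_add, ← cpair_add, ← h1]
    congr 1
    refine Finset.prod_congr rfl fun j _ => ?_
    simp [hA, intVec]
    rfl
  · rw [div_eq_mul_inv, mul_assoc]

/-! ### Signed decomposition of a simple polytope into flipped cones -/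

/-- The data of a simple polytope `{x | ∀ F, 0 ≤ ⟨x, U F⟩ + l F}`: its facets, its vertices, and at
each vertex `v` the basis `M v` dual to the normals of the `n` facets through `v`. -/
structure SimpleData (n : ℕ) (ι : Type) where
  facets : Finset ι
  U : ι → Fin n → ℝ
  l : ι → ℝ
  verts : Finset (Fin n → ℝ)
  M : (Fin n → ℝ) → ι → Fin n → ℝ
  compact : IsCompact {x : Fin n → ℝ | ∀ F ∈ facets, 0 ≤ x ⬝ᵥ U F + l F}
  mem_body : ∀ v ∈ verts, ∀ F ∈ facets, 0 ≤ v ⬝ᵥ U F + l F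
  card_tight : ∀ v ∈ verts, (facets.filter fun F => v ⬝ᵥ U F + l F = 0).card = n
  dual : ∀ v ∈ verts, ∀ F ∈ facets, v ⬝ᵥ U F + l F = 0 → ∀ F' ∈ facets,
    v ⬝ᵥ U F' + l F' = 0 → M v F ⬝ᵥ U F' = if F = F' then 1 else 0
  expand : ∀ v ∈ verts, ∀ y : Fin n → ℝ,
    y - v = ∑ F ∈ facets.filter (fun F => v ⬝ᵥ U F + l F = 0), (y ⬝ᵥ U F + l F) • M v F
  extreme : ∀ x ∈ Set.extremePoints ℝ {x : Fin n → ℝ | ∀ F ∈ facets, 0 ≤ x ⬝ᵥ U F + l F},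
    x ∈ verts

namespace SimpleData

variable {n : ℕ} {ι : Type} (D : SimpleData n ι)

/-- The affine function `⟨x, U F⟩ + l F` cutting out the facet `F`. -/
def a (F : ι) (x : Fin n → ℝ) : ℝ := x ⬝ᵥ D.U F + D.l F

/-- The polytope itself. -/
def body : Set (Fin n → ℝ) := {x | ∀ F ∈ D.facets, 0 ≤ D.a F x}

/-- The facets through `v`. -/
def tight (v : Fin n → ℝ) : Finset ι := D.facets.filter fun F => D.a F v = 0

/-- The linear functional `ξ` is not constant along any edge direction at any vertex. -/
def Generic (ξ : Fin n → ℝ) : Prop := ∀ v ∈ D.verts, ∀ F ∈ D.tight v, D.M v F ⬝ᵥ ξ ≠ 0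

/-- `v` lies on the face cut out by the facets in `B`, and `ξ` increases along all edges of that
face at `v`. -/
def IsMin (ξ : Fin n → ℝ) (B : Finset ι) (v : Fin n → ℝ) : Prop :=
  B ⊆ D.tight v ∧ ∀ F ∈ D.tight v \ B, 0 < D.M v F ⬝ᵥ ξ

/-- The signed count of the cones containing `y`, where the cone at a vertex has its
`ξ`-increasing edges flipped. -/
def signedCount (ξ y : Fin n → ℝ) : ℂ :=
  ∑ v ∈ D.verts, ∏ F ∈ D.tight v, flipCoeff (0 < D.M v F ⬝ᵥ ξ) (D.a F y)

lemma mem_tight {v : Fin n → ℝ} {F : ι} : F ∈ D.tight v ↔ F ∈ D.facets ∧ D.a F v = 0 := by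
  simp [tight]

lemma expand_dot {v : Fin n → ℝ} (hv : v ∈ D.verts) (y ξ : Fin n → ℝ) :
    (y - v) ⬝ᵥ ξ = ∑ F ∈ D.tight v, D.a F y * (D.M v F ⬝ᵥ ξ) := by
  rw [D.expand v hv y, sum_dotProduct]
  exact Finset.sum_congr rfl fun F _ => by rw [smul_dotProduct, smul_eq_mul]; rfl

lemma a_comb (F : ι) (s t : ℝ) (hst : s + t = 1) (x y : Fin n → ℝ) :
    D.a F (s • x + t • y) = s * D.a F x + t * D.a F y := by
  simp only [a, add_dotProduct, smul_dotProduct, smul_eq_mul]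
  linear_combination -(D.l F) * hst

lemma a_continuous (F : ι) : Continuous (D.a F) := by
  unfold a dotProduct
  fun_prop

lemma isMin_le {ξ : Fin n → ℝ} {B : Finset ι} {v w : Fin n → ℝ}
    (hw : w ∈ D.verts) (h : D.IsMin ξ B v) (hB : B ⊆ D.tight w) :
    ∀ F ∈ D.tight v, 0 ≤ D.a F w * (D.M v F ⬝ᵥ ξ) := by
  intro F hF
  by_cases hFB : F ∈ B
  · rw [(D.mem_tight.1 (hB hFB)).2, zero_mul]
  · exact mul_nonneg (D.mem_body w hw F (D.mem_tight.1 hF).1)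
      (h.2 F (Finset.mem_sdiff.2 ⟨hF, hFB⟩)).le

/-- A vertex satisfying `IsMin` is the unique minimizer of `ξ` on the face. -/
lemma isMin_unique {ξ : Fin n → ℝ} {B : Finset ι} {v w : Fin n → ℝ} (hv : v ∈ D.verts)
    (hw : w ∈ D.verts) (h : D.IsMin ξ B v) (h' : D.IsMin ξ B w) : v = w := by
  have h1 := D.isMin_le hw h h'.1
  have h2 := D.isMin_le hv h' h.1
  have e1 := D.expand_dot hv w ξ
  have e2 := D.expand_dot hw v ξ
  have s1 := Finset.sum_nonneg h1
  have s2 := Finset.sum_nonneg h2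
  have hneg : (v - w) ⬝ᵥ ξ = -((w - v) ⬝ᵥ ξ) := by
    rw [← neg_dotProduct, neg_sub]
  have h0 : ∑ F ∈ D.tight v, D.a F w * (D.M v F ⬝ᵥ ξ) = 0 := by linarith
  have h3 := (Finset.sum_eq_zero_iff_of_nonneg h1).1 h0
  have h4 : w - v = 0 := by
    rw [D.expand v hv w]
    refine Finset.sum_eq_zero fun F hF => ?_
    have hF' : F ∈ D.tight v := hF
    have : D.a F w = 0 := by
      by_cases hFB : F ∈ B
      · exact (D.mem_tight.1 (h'.1 hFB)).2
      · exact (mul_eq_zero.1 (h3 F hF')).resolve_right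
          (h.2 F (Finset.mem_sdiff.2 ⟨hF', hFB⟩)).ne'
    show D.a F w • D.M v F = 0
    rw [this, zero_smul]
  exact (sub_eq_zero.1 h4).symm

/-- A generic `ξ` attains its minimum on every nonempty face at a vertex satisfying `IsMin`:
an extreme point of the set of minimizers is a vertex, and moving along an edge of the face cannot
decrease `ξ`. -/
lemma isMin_exists {ξ : Fin n → ℝ} (hξ : D.Generic ξ) {B : Finset ι} (hBf : B ⊆ D.facets)
    {x₀ : Fin n → ℝ} (hx₀ : x₀ ∈ D.body) (hB : ∀ F ∈ B, D.a F x₀ = 0) :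
    ∃ v ∈ D.verts, D.IsMin ξ B v := by
  have hcont : Continuous fun x : Fin n → ℝ => x ⬝ᵥ ξ := by
    unfold dotProduct
    fun_prop
  set G : Set (Fin n → ℝ) := D.body ∩ {x | ∀ F ∈ B, D.a F x = 0} with hG
  have hclosed : IsClosed {x : Fin n → ℝ | ∀ F ∈ B, D.a F x = 0} := by
    simp only [Set.ofPred_forall]
    exact isClosed_biInter fun F _ => isClosed_eq (D.a_continuous F) continuous_const
  have hGc : IsCompact G := D.compact.inter_right hclosed
  obtain ⟨x₁, hx₁G, hx₁⟩ := hGc.exists_isMinOn ⟨x₀, hx₀, hB⟩ hcont.continuousOn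
  set K : Set (Fin n → ℝ) := G ∩ {x | x ⬝ᵥ ξ ≤ x₁ ⬝ᵥ ξ} with hK
  have hKc : IsCompact K := hGc.inter_right (isClosed_le hcont continuous_const)
  obtain ⟨v, hv⟩ := hKc.extremePoints_nonempty ⟨x₁, hx₁G, le_refl (x₁ ⬝ᵥ ξ)⟩
  rw [mem_extremePoints_iff_left] at hv
  obtain ⟨⟨⟨hvP, hvB⟩, hvξ⟩, hvext⟩ := hv
  simp only [Set.mem_ofPred_eq] at hvξ hvB
  have hvV : v ∈ D.verts := by
    apply D.extreme
    rw [mem_extremePoints_iff_left]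
    refine ⟨hvP, fun p hp q hq hpq => ?_⟩
    have hseg := hpq
    obtain ⟨s, t, hs, ht, hst, rfl⟩ := hpq
    have hz : ∀ F ∈ B, D.a F p = 0 ∧ D.a F q = 0 := by
      intro F hF
      have h0 := hvB F hF
      rw [D.a_comb F s t hst] at h0
      have h1 : 0 ≤ D.a F p := hp F (hBf hF)
      have h2 : 0 ≤ D.a F q := hq F (hBf hF)
      have h3 := mul_nonneg hs.le h1
      have h4 := mul_nonneg ht.le h2
      constructor
      · exact (mul_eq_zero.1 (by linarith : s * D.a F p = 0)).resolve_left hs.ne'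
      · exact (mul_eq_zero.1 (by linarith : t * D.a F q = 0)).resolve_left ht.ne'
    have hpG : p ∈ G := ⟨hp, fun F hF => (hz F hF).1⟩
    have hqG : q ∈ G := ⟨hq, fun F hF => (hz F hF).2⟩
    have h1 : x₁ ⬝ᵥ ξ ≤ p ⬝ᵥ ξ := hx₁ hpG
    have h2 : x₁ ⬝ᵥ ξ ≤ q ⬝ᵥ ξ := hx₁ hqG
    rw [add_dotProduct, smul_dotProduct, smul_dotProduct, smul_eq_mul, smul_eq_mul] at hvξ
    have hpK : p ⬝ᵥ ξ ≤ x₁ ⬝ᵥ ξ := by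
      by_contra hlt
      push Not at hlt
      have h3 := mul_lt_mul_of_pos_left hlt hs
      have h4 := mul_le_mul_of_nonneg_left h2 ht.le
      have h5 : s * (x₁ ⬝ᵥ ξ) + t * (x₁ ⬝ᵥ ξ) = x₁ ⬝ᵥ ξ := by rw [← add_mul, hst, one_mul]
      linarith
    have hqK : q ⬝ᵥ ξ ≤ x₁ ⬝ᵥ ξ := by
      by_contra hlt
      push Not at hlt
      have h3 := mul_lt_mul_of_pos_left hlt ht
      have h4 := mul_le_mul_of_nonneg_left h1 hs.le
      have h5 : s * (x₁ ⬝ᵥ ξ) + t * (x₁ ⬝ᵥ ξ) = x₁ ⬝ᵥ ξ := by rw [← add_mul, hst, one_mul]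
      linarith
    exact hvext p ⟨hpG, hpK⟩ q ⟨hqG, hqK⟩ hseg
  have hBt : B ⊆ D.tight v := fun F hF => D.mem_tight.2 ⟨hBf hF, hvB F hF⟩
  refine ⟨v, hvV, hBt, fun F hF => ?_⟩
  rw [Finset.mem_sdiff] at hF
  refine lt_of_le_of_ne ?_ (hξ v hvV F hF.1).symm
  -- `v + ε • M v F` stays in the face for small `ε > 0`
  have ha : ∀ (F' : ι) (ε : ℝ),
      D.a F' (v + ε • D.M v F) = D.a F' v + ε * (D.M v F ⬝ᵥ D.U F') := by
    intro F' ε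
    simp only [a, add_dotProduct, smul_dotProduct, smul_eq_mul]
    ring
  have hdual : ∀ F' ∈ D.tight v, D.M v F ⬝ᵥ D.U F' = if F = F' then 1 else 0 := by
    intro F' hF'
    exact D.dual v hvV F (D.mem_tight.1 hF.1).1 (D.mem_tight.1 hF.1).2 F'
      (D.mem_tight.1 hF').1 (D.mem_tight.1 hF').2
  have hev : ∀ᶠ ε in nhdsWithin (0 : ℝ) (Set.Ioi 0),
      ∀ F' ∈ D.facets, 0 ≤ D.a F' (v + ε • D.M v F) := by
    rw [Filter.eventually_all_finset]
    intro F' hF'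
    by_cases ht : D.a F' v = 0
    · filter_upwards [self_mem_nhdsWithin] with ε hε
      rw [ha, ht, hdual F' (D.mem_tight.2 ⟨hF', ht⟩)]
      have hε' : (0 : ℝ) < ε := hε
      split_ifs <;> simp [hε'.le]
    · have hpos : 0 < D.a F' v := lt_of_le_of_ne (D.mem_body v hvV F' hF') (Ne.symm ht)
      have hc : Filter.Tendsto (fun ε : ℝ => D.a F' v + ε * (D.M v F ⬝ᵥ D.U F')) (nhds 0)
          (nhds (D.a F' v + 0 * (D.M v F ⬝ᵥ D.U F'))) :=
        Continuous.tendsto (by fun_prop) 0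
      rw [zero_mul, add_zero] at hc
      filter_upwards [nhdsWithin_le_nhds (hc.eventually (lt_mem_nhds hpos))] with ε hε
      rw [ha]
      exact hε.le
  obtain ⟨ε, hε, hε0⟩ := (hev.and self_mem_nhdsWithin).exists
  have hε0' : (0 : ℝ) < ε := hε0
  have hmem : v + ε • D.M v F ∈ G := by
    refine ⟨hε, fun F' hF' => ?_⟩
    rw [ha, hvB F' hF', hdual F' (hBt hF'), if_neg, mul_zero, add_zero]
    rintro rfl
    exact hF.2 hF'
  have h1 : x₁ ⬝ᵥ ξ ≤ (v + ε • D.M v F) ⬝ᵥ ξ := hx₁ hmem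
  rw [add_dotProduct, smul_dotProduct, smul_eq_mul] at h1
  have h2 : 0 ≤ ε * (D.M v F ⬝ᵥ ξ) := by linarith
  exact nonneg_of_mul_nonneg_right h2 hε0'

/-- The signed count is the Brianchon–Gram alternating sum over the nonempty faces, each face being
recorded by the set `B` of facets containing it. The right-hand side does not involve `ξ`. -/
lemma signedCount_eq {ξ : Fin n → ℝ} (hξ : D.Generic ξ) (y : Fin n → ℝ) :
    D.signedCount ξ y = ∑ B ∈ D.facets.powerset,
      if ∃ v ∈ D.verts, B ⊆ D.tight v then
        (∏ F ∈ B, if 0 ≤ D.a F y then (1 : ℂ) else 0) * (-1) ^ (n - B.card) else 0 := by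
  have hv : ∀ v ∈ D.verts, ∏ F ∈ D.tight v, flipCoeff (0 < D.M v F ⬝ᵥ ξ) (D.a F y)
      = ∑ B ∈ D.facets.powerset, if D.IsMin ξ B v then
        (∏ F ∈ B, if 0 ≤ D.a F y then (1 : ℂ) else 0) * (-1) ^ (n - B.card) else 0 := by
    intro v hv
    have h1 : ∀ F ∈ D.tight v, flipCoeff (0 < D.M v F ⬝ᵥ ξ) (D.a F y)
        = (if 0 ≤ D.a F y then (1 : ℂ) else 0) + (if 0 < D.M v F ⬝ᵥ ξ then -1 else 0) := by
      intro F _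
      unfold flipCoeff
      split_ifs <;> simp
    rw [Finset.prod_congr rfl h1, Finset.prod_add]
    have hsub : (D.tight v).powerset ⊆ D.facets.powerset :=
      Finset.powerset_mono.2 (Finset.filter_subset _ _)
    rw [← Finset.sum_subset hsub]
    · refine Finset.sum_congr rfl fun B hB => ?_
      rw [Finset.mem_powerset] at hB
      split_ifs with hmin
      · congr 1
        have hc : (D.tight v \ B).card = n - B.card := by
          rw [Finset.card_sdiff_of_subset hB]
          congr 1
          exact D.card_tight v hv
        rw [← hc, ← Finset.prod_const]
        exact Finset.prod_congr rfl fun F hF => if_pos (hmin.2 F hF)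
      · have : ∃ F ∈ D.tight v \ B, ¬ 0 < D.M v F ⬝ᵥ ξ := by
          by_contra hcon
          push Not at hcon
          exact hmin ⟨hB, hcon⟩
        obtain ⟨F, hF, hneg⟩ := this
        rw [Finset.prod_eq_zero hF (if_neg hneg), mul_zero]
    · intro B _ hB
      rw [if_neg]
      intro h
      exact hB (Finset.mem_powerset.2 h.1)
  rw [signedCount, Finset.sum_congr rfl hv, Finset.sum_comm]
  refine Finset.sum_congr rfl fun B hB => ?_
  rw [Finset.mem_powerset] at hB
  split_ifs with hex
  · obtain ⟨w, hw, hBw⟩ := hex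
    obtain ⟨v, hv, hmin⟩ := D.isMin_exists hξ hB (x₀ := w) (D.mem_body w hw)
      (fun F hF => (D.mem_tight.1 (hBw hF)).2)
    rw [Finset.sum_eq_single v, if_pos hmin]
    · intro v' hv' hne
      rw [if_neg]
      intro hmin'
      exact hne (D.isMin_unique hv' hv hmin' hmin)
    · intro h
      exact absurd hv h
  · refine Finset.sum_eq_zero fun v hv => if_neg fun h => hex ⟨v, hv, h.1⟩

lemma eventually_add_mul_ne (b c : ℝ) (hc : c ≠ 0) :
    ∀ᶠ t in nhdsWithin (0 : ℝ) {0}ᶜ, b + t * c ≠ 0 := by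
  by_cases hb : b = 0
  · filter_upwards [self_mem_nhdsWithin] with t ht
    rw [hb, zero_add]
    exact mul_ne_zero ht hc
  · have h1 : Filter.Tendsto (fun t : ℝ => b + t * c) (nhds 0) (nhds (b + 0 * c)) :=
      Continuous.tendsto (by fun_prop) 0
    rw [zero_mul, add_zero] at h1
    exact nhdsWithin_le_nhds (h1.eventually_ne hb)

lemma exists_generic : ∃ ζ, D.Generic ζ := by
  obtain ⟨ζ, hζ⟩ := Module.Dual.exists_forall_ne_zero_of_forall_exists
    (ι := ↥((D.verts ×ˢ D.facets).filter fun q => q.2 ∈ D.tight q.1))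
    (K := ℝ) (M := Fin n → ℝ) (fun q => dotProductBilin ℝ ℝ (D.M q.1.1 q.1.2)) (by
      rintro ⟨⟨v, F⟩, hq⟩
      obtain ⟨h1, h2⟩ := Finset.mem_filter.1 hq
      refine ⟨D.U F, ?_⟩
      have hv := (Finset.mem_product.1 h1).1
      have := D.dual v hv F (D.mem_tight.1 h2).1 (D.mem_tight.1 h2).2 F
        (D.mem_tight.1 h2).1 (D.mem_tight.1 h2).2
      simp only [if_true] at this
      simp [this])
  refine ⟨ζ, fun v hv F hF => ?_⟩
  have := hζ ⟨(v, F), Finset.mem_filter.2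
    ⟨Finset.mem_product.2 ⟨hv, (D.mem_tight.1 hF).1⟩, hF⟩⟩
  simpa using this

lemma generic_perturb {ζ : Fin n → ℝ} (hζ : D.Generic ζ) (η : Fin n → ℝ) :
    ∀ᶠ t in nhdsWithin (0 : ℝ) {0}ᶜ, D.Generic (η + t • ζ) := by
  unfold Generic
  rw [Filter.eventually_all_finset]
  intro v hv
  rw [Filter.eventually_all_finset]
  intro F hF
  filter_upwards [eventually_add_mul_ne (D.M v F ⬝ᵥ η) (D.M v F ⬝ᵥ ζ) (hζ v hv F hF)] with t ht
  rwa [dotProduct_add, dotProduct_smul, smul_eq_mul]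

/-- The Lawrence–Varchenko decomposition: the flipped cones, counted with sign, add up to the
polytope. For `y` outside, independence of `ξ` allows to take `ξ` larger at `y` than on the
polytope, and then no flipped cone contains `y`. -/
lemma signedCount_eq_indicator {ξ : Fin n → ℝ} (hξ : D.Generic ξ) (y : Fin n → ℝ) :
    D.signedCount ξ y = if y ∈ D.body then 1 else 0 := by
  split_ifs with hy
  · have hneg : D.Generic (-ξ) := by
      intro v hv F hF
      rw [dotProduct_neg]
      exact neg_ne_zero.2 (hξ v hv F hF)
    obtain ⟨v, hv, hmin⟩ := D.isMin_exists hneg (Finset.empty_subset _) hy (by simp)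
    rw [signedCount, Finset.sum_eq_single v]
    · refine Finset.prod_eq_one fun F hF => ?_
      have h1 := hmin.2 F (by simpa using hF)
      rw [dotProduct_neg] at h1
      have h2 : 0 ≤ D.a F y := hy F (D.mem_tight.1 hF).1
      rw [flipCoeff, if_neg (by linarith), if_pos h2]
    · intro w hw hne
      have : ∃ F ∈ D.tight w, 0 < D.M w F ⬝ᵥ ξ := by
        by_contra hcon
        push Not at hcon
        refine hne (D.isMin_unique hw hv ⟨Finset.empty_subset _, fun F hF => ?_⟩ hmin)
        have hF' : F ∈ D.tight w := by simpa using hF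
        rw [dotProduct_neg]
        have h1 := hcon F hF'
        have h2 := hξ w hw F hF'
        exact neg_pos.2 (lt_of_le_of_ne h1 h2)
      obtain ⟨F, hF, hpos⟩ := this
      refine Finset.prod_eq_zero hF ?_
      have h2 : 0 ≤ D.a F y := hy F (D.mem_tight.1 hF).1
      rw [flipCoeff, if_pos hpos, if_pos h2]
    · intro h
      exact absurd hv h
  · have hy' : ∃ F ∈ D.facets, D.a F y < 0 := by
      by_contra hcon
      push Not at hcon
      exact hy hcon
    obtain ⟨F₀, hF₀, hlt⟩ := hy'
    obtain ⟨ζ, hζ⟩ := D.exists_generic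
    have hsep : ∀ᶠ t in nhdsWithin (0 : ℝ) {0}ᶜ,
        ∀ v ∈ D.verts, 0 < (y - v) ⬝ᵥ (-D.U F₀ + t • ζ) := by
      rw [Filter.eventually_all_finset]
      intro v hv
      have hpos : 0 < (y - v) ⬝ᵥ (-D.U F₀) := by
        have h1 := D.mem_body v hv F₀ hF₀
        unfold a at hlt
        rw [dotProduct_neg, sub_dotProduct]
        linarith
      have hc : Filter.Tendsto (fun t : ℝ => (y - v) ⬝ᵥ (-D.U F₀) + t * ((y - v) ⬝ᵥ ζ))
          (nhds 0) (nhds ((y - v) ⬝ᵥ (-D.U F₀) + 0 * ((y - v) ⬝ᵥ ζ))) :=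
        Continuous.tendsto (by fun_prop) 0
      rw [zero_mul, add_zero] at hc
      filter_upwards [nhdsWithin_le_nhds (hc.eventually (lt_mem_nhds hpos))] with t ht
      rw [dotProduct_add, dotProduct_smul, smul_eq_mul]
      exact ht
    obtain ⟨t, hgen, hpos⟩ := ((D.generic_perturb hζ (-D.U F₀)).and hsep).exists
    rw [D.signedCount_eq hξ, ← D.signedCount_eq hgen, signedCount]
    refine Finset.sum_eq_zero fun v hv => ?_
    by_contra hne
    rw [← ne_eq, Finset.prod_ne_zero_iff] at hne
    have h1 := hpos v hv
    rw [D.expand_dot hv] at h1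
    refine absurd h1 (not_lt.2 (Finset.sum_nonpos fun F hF => ?_))
    have h2 := hne F hF
    unfold flipCoeff at h2
    split_ifs at h2 with hp ha ha
    · simp at h2
    · exact mul_nonpos_of_nonpos_of_nonneg (not_le.1 ha).le hp.le
    · exact mul_nonpos_of_nonneg_of_nonpos ha (not_lt.1 hp)
    · simp at h2

end SimpleData

/-! ### Faces of a lattice polytope -/

lemma IsFaceOf.isExposed {n : ℕ} {P F : Set (Fin n → ℝ)} (h : IsFaceOf P F) :
    IsExposed ℝ P F := by
  rcases h with rfl | ⟨-, l, hl⟩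
  · exact IsExposed.refl _
  · intro _
    exact ⟨LinearMap.toContinuousLinearMap l, by simpa using hl⟩

/-- A polytope has finitely many faces, since a face is determined by its extreme points. -/
lemma finite_faces {n : ℕ} {P : Set (Fin n → ℝ)} (T : Set (Fin n → ℝ)) (hT : T.Finite)
    (hP : P = convexHull ℝ T) : {F | IsFaceOf P F}.Finite := by
  have hc : IsCompact P := hP ▸ hT.isCompact_convexHull ℝ
  have hconv : Convex ℝ P := hP ▸ convex_convexHull ℝ T
  refine Set.Finite.of_injOn (f := fun F => F.extremePoints ℝ) (t := {s | s ⊆ T}) ?_ ?_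
    hT.finite_subsets
  · intro F hF
    have h1 : F.extremePoints ℝ ⊆ P.extremePoints ℝ :=
      (IsFaceOf.isExposed hF).isExtreme.extremePoints_subset_extremePoints
    refine h1.trans ?_
    rw [hP]
    exact extremePoints_convexHull_subset
  · intro F hF F' hF' heq
    have h1 := closure_convexHull_extremePoints ((IsFaceOf.isExposed hF).isCompact hc)
      ((IsFaceOf.isExposed hF).convex hconv)
    have h2 := closure_convexHull_extremePoints ((IsFaceOf.isExposed hF').isCompact hc)
      ((IsFaceOf.isExposed hF').convex hconv)
    simp only at heq
    rw [← h1, ← h2, heq]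

/-- An extreme point of a polyhedron is a vertex: it is the only zero of the sum of the
nonnegative affine functions vanishing there. -/
lemma isFaceOf_of_extreme {n : ℕ} {ι : Type} (facets : Finset ι) (U : ι → Fin n → ℝ) (l : ι → ℝ)
    {x : Fin n → ℝ}
    (hx : x ∈ Set.extremePoints ℝ {x : Fin n → ℝ | ∀ F ∈ facets, 0 ≤ x ⬝ᵥ U F + l F}) :
    IsFaceOf {x : Fin n → ℝ | ∀ F ∈ facets, 0 ≤ x ⬝ᵥ U F + l F} {x} := by
  rw [mem_extremePoints_iff_left] at hx
  obtain ⟨hxP, hext⟩ := hx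
  simp only [Set.mem_ofPred_eq] at hxP
  set T := facets.filter fun F => x ⬝ᵥ U F + l F = 0 with hT
  have hval : ∀ p : Fin n → ℝ, (dotProductBilin ℝ ℝ (-∑ F ∈ T, U F)) p
      = -∑ F ∈ T, p ⬝ᵥ U F := by
    intro p
    simp only [dotProductBilin_apply_apply, neg_dotProduct, sum_dotProduct]
    simp only [dotProduct_comm]
  refine Or.inr ⟨Set.singleton_nonempty x, dotProductBilin ℝ ℝ (-∑ F ∈ T, U F), ?_⟩
  have hle : ∀ p : Fin n → ℝ, (∀ F ∈ facets, 0 ≤ p ⬝ᵥ U F + l F) →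
      ∀ F ∈ T, x ⬝ᵥ U F ≤ p ⬝ᵥ U F := by
    intro p hp F hF
    obtain ⟨h1, h2⟩ := Finset.mem_filter.1 hF
    have := hp F h1
    linarith
  ext p
  simp only [Set.mem_singleton_iff, Set.mem_ofPred_eq, hval]
  constructor
  · rintro rfl
    exact ⟨hxP, fun q hq => neg_le_neg (Finset.sum_le_sum (hle q hq))⟩
  · rintro ⟨hp, hmax⟩
    have h1 := neg_le_neg_iff.1 (hmax x hxP)
    have h2 : ∀ F ∈ T, x ⬝ᵥ U F = p ⬝ᵥ U F :=
      (Finset.sum_eq_sum_iff_of_le (hle p hp)).1 (le_antisymm (Finset.sum_le_sum (hle p hp)) h1)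
    -- `x` is interior to a segment from `p` to a point slightly beyond `x`
    have hev : ∀ᶠ ε in nhdsWithin (0 : ℝ) (Set.Ioi 0),
        ∀ F ∈ facets, 0 ≤ (x - ε • (p - x)) ⬝ᵥ U F + l F := by
      rw [Filter.eventually_all_finset]
      intro F hF
      by_cases ht : x ⬝ᵥ U F + l F = 0
      · refine Filter.Eventually.of_forall fun ε => ?_
        have := h2 F (Finset.mem_filter.2 ⟨hF, ht⟩)
        rw [sub_dotProduct, smul_dotProduct, sub_dotProduct, this, sub_self, smul_zero, sub_zero,
          ← this, ht]
      · have hpos : 0 < x ⬝ᵥ U F + l F := lt_of_le_of_ne (hxP F hF) (Ne.symm ht)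
        have hc : Filter.Tendsto (fun ε : ℝ => x ⬝ᵥ U F - ε * ((p - x) ⬝ᵥ U F) + l F) (nhds 0)
            (nhds (x ⬝ᵥ U F - 0 * ((p - x) ⬝ᵥ U F) + l F)) :=
          Continuous.tendsto (by fun_prop) 0
        rw [zero_mul, sub_zero] at hc
        filter_upwards [nhdsWithin_le_nhds (hc.eventually (lt_mem_nhds hpos))] with ε hε
        rw [sub_dotProduct, smul_dotProduct, smul_eq_mul]
        exact hε.le
    obtain ⟨ε, hε, hε0⟩ := (hev.and self_mem_nhdsWithin).exists
    have hε0' : (0 : ℝ) < ε := hε0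
    refine hext p hp _ hε ⟨ε / (1 + ε), 1 / (1 + ε), by positivity, by positivity, ?_, ?_⟩
    · field_simp
      ring
    · ext i
      simp only [Pi.add_apply, Pi.smul_apply, Pi.sub_apply, smul_eq_mul]
      field_simp
      ring

lemma finite_lattice_points {n : ℕ} {P : Set (Fin n → ℝ)} (hc : IsCompact P) :
    {y : Fin n → ℤ | intVec y ∈ P}.Finite := by
  obtain ⟨R, hR⟩ := hc.isBounded.subset_closedBall 0
  refine (Set.Finite.pi' (t := fun _ : Fin n => Set.Icc (-⌈R⌉) ⌈R⌉)
    (fun _ => Set.finite_Icc _ _)).subset ?_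
  intro y hy i
  have h1 : ‖intVec y‖ ≤ R := by simpa using hR hy
  have h2 : |(y i : ℝ)| ≤ R := (norm_le_pi_norm (intVec y) i).trans h1
  have h3 : |(y i : ℝ)| ≤ (⌈R⌉ : ℝ) := h2.trans (Int.le_ceil R)
  rw [abs_le] at h3
  exact ⟨by exact_mod_cast h3.1, by exact_mod_cast h3.2⟩

lemma cpair_re {n : ℕ} (x : Fin n → ℝ) (z : Fin n → ℂ) :
    (cpair x z).re = x ⬝ᵥ fun i => (z i).re := by
  simp [cpair, dotProduct]


/-! ### The formula -/

/-- (Brion–Vergne.)  Let `P ⊂ ℝ^n` be a full-dimensional simple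
lattice polytope with primitive facet normals `u_F`, dual vertex bases `m_v^F`, finite
groups `G(σ_v)` and characters `χ_γ`.  For `z ∈ ℂ^n` with
`χ_γ(m_v^F)·exp⟨m_v^F,z⟩ ≠ 1` for all vertices `v`, all `γ ∈ G(σ_v)`, all `F ∈ 𝓕^v`:
`∑_{m ∈ ℤ^n ∩ P} e^{⟨m,z⟩} = ∑_v (e^{⟨v,z⟩}/|G(σ_v)|) ∑_{γ ∈ G(σ_v)}
   ∏_{F ∈ 𝓕^v} 1/(1 - χ_γ(m_v^F) e^{⟨m_v^F,z⟩})`. -/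
theorem stmt13 (n : ℕ) (P : Set (Fin n → ℝ))
    (S : Finset (Fin n → ℤ))
    (hP : P = convexHull ℝ (intVec '' (S : Set (Fin n → ℤ))))
    (hfull : affineSpan ℝ P = ⊤) (hsimple : IsSimple P)
    (u : Set (Fin n → ℝ) → (Fin n → ℤ)) (lam : Set (Fin n → ℝ) → ℤ)
    (hPdesc : P = {x | ∀ F, IsFaceOf P F → faceDim F = n - 1 →
      0 ≤ (∑ i, x i * (u F i : ℝ)) + (lam F : ℝ)})
    (hprim : ∀ F, IsFaceOf P F → faceDim F = n - 1 →
      ∀ c : ℤ, 0 < c → (∀ i, c ∣ u F i) → c = 1)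
    (hfacet : ∀ F, IsFaceOf P F → faceDim F = n - 1 →
      F = {x | x ∈ P ∧ (∑ i, x i * (u F i : ℝ)) + (lam F : ℝ) = 0})
    (Fv : (Fin n → ℝ) → Fin n → Set (Fin n → ℝ))
    (hFv : ∀ x, IsFaceOf P {x} → Function.Injective (Fv x) ∧
      (∀ j, IsFaceOf P (Fv x j) ∧ faceDim (Fv x j) = n - 1 ∧ x ∈ Fv x j) ∧
      (∀ F, IsFaceOf P F → faceDim F = n - 1 → x ∈ F → ∃ j, F = Fv x j))
    (m : (Fin n → ℝ) → Fin n → (Fin n → ℝ))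
    (hm : ∀ x, IsFaceOf P {x} → ∀ j j' : Fin n,
      (∑ i, m x j i * (u (Fv x j') i : ℝ)) = if j = j' then 1 else 0)
    (z : Fin n → ℂ)
    (hz : ∀ x, IsFaceOf P {x} → ∀ γ : (Fin n → ℤ) ⧸ normalLattice u Fv x, ∀ j : Fin n,
      chi u Fv m x γ j * Complex.exp (cpair (m x j) z) ≠ 1) :
    ∑ᶠ mm ∈ {mm : Fin n → ℤ | intVec mm ∈ P}, Complex.exp (cpair (intVec mm) z)
      = ∑ᶠ x ∈ {x : Fin n → ℝ | IsFaceOf P {x}},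
          Complex.exp (cpair x z) / (Nat.card ((Fin n → ℤ) ⧸ normalLattice u Fv x) : ℂ) *
            ∑ᶠ γ : (Fin n → ℤ) ⧸ normalLattice u Fv x,
              ∏ j : Fin n,
                (1 - chi u Fv m x γ j * Complex.exp (cpair (m x j) z))⁻¹ := by
  -- in dimension `0` the polytope would be its own facet, with no primitive normal
  rcases Nat.eq_zero_or_pos n with rfl | hn
  · exfalso
    have hd : faceDim P = 0 - 1 := by
      have : faceDim P ≤ 0 := by
        simpa [faceDim] using Submodule.finrank_le (affineSpan ℝ P).direction
      omega
    have := hprim P (Or.inl rfl) hd 2 (by norm_num) (fun i => i.elim0)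
    norm_num at this
  have hTfin : (intVec '' (S : Set (Fin n → ℤ))).Finite := S.finite_toSet.image _
  have hfaces := finite_faces _ hTfin hP
  have hc : IsCompact P := hP ▸ hTfin.isCompact_convexHull ℝ
  have hfacetsFin : {F | IsFaceOf P F ∧ faceDim F = n - 1}.Finite :=
    hfaces.subset fun F hF => hF.1
  have hvertsFin : {x : Fin n → ℝ | IsFaceOf P {x}}.Finite :=
    hfaces.preimage Set.singleton_injective.injOn
  have hLfin := finite_lattice_points hc
  have hvP : ∀ x, IsFaceOf P {x} → x ∈ P := fun x hx =>
    (IsFaceOf.isExposed hx).subset rfl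
  have hbody : P = {x : Fin n → ℝ | ∀ F ∈ hfacetsFin.toFinset,
      0 ≤ x ⬝ᵥ (fun i => (u F i : ℝ)) + (lam F : ℝ)} := by
    conv_lhs => rw [hPdesc]
    ext x
    simp only [Set.mem_ofPred_eq, Set.Finite.mem_toFinset, dotProduct]
    exact ⟨fun h F hF => h F hF.1 hF.2, fun h F h1 h2 => h F ⟨h1, h2⟩⟩
  have htight : ∀ x, IsFaceOf P {x} → hfacetsFin.toFinset.filter
      (fun F => x ⬝ᵥ (fun i => (u F i : ℝ)) + (lam F : ℝ) = 0)
        = Finset.univ.image (Fv x) := by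
    intro x hx
    obtain ⟨-, h1, h2⟩ := hFv x hx
    ext F
    simp only [Finset.mem_filter, Set.Finite.mem_toFinset, Set.mem_ofPred_eq, Finset.mem_image,
      Finset.mem_univ, true_and]
    constructor
    · rintro ⟨⟨hF, hd⟩, h0⟩
      have hxF : x ∈ F := by
        rw [hfacet F hF hd]
        exact ⟨hvP x hx, h0⟩
      obtain ⟨j, hj⟩ := h2 F hF hd hxF
      exact ⟨j, hj.symm⟩
    · rintro ⟨j, rfl⟩
      obtain ⟨hF, hd, hxF⟩ := h1 j
      rw [hfacet _ hF hd] at hxF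
      exact ⟨⟨hF, hd⟩, hxF.2⟩
  have hMx : ∀ x, IsFaceOf P {x} → ∀ j, Function.extend (Fv x) (m x) 0 (Fv x j) = m x j :=
    fun x hx j => (hFv x hx).1.extend_apply _ _ _
  have hzero : ∀ x, IsFaceOf P {x} → ∀ j,
      x ⬝ᵥ (fun i => (u (Fv x j) i : ℝ)) + (lam (Fv x j) : ℝ) = 0 := by
    intro x hx j
    have : Fv x j ∈ Finset.univ.image (Fv x) := Finset.mem_image_of_mem _ (Finset.mem_univ j)
    rw [← htight x hx] at this
    exact (Finset.mem_filter.1 this).2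
  let D : SimpleData n (Set (Fin n → ℝ)) :=
    { facets := hfacetsFin.toFinset
      U := fun F i => (u F i : ℝ)
      l := fun F => (lam F : ℝ)
      verts := hvertsFin.toFinset
      M := fun x => Function.extend (Fv x) (m x) 0
      compact := hbody ▸ hc
      mem_body := by
        intro v hv
        have := hvP v (hvertsFin.mem_toFinset.1 hv)
        rw [hbody] at this
        exact this
      card_tight := by
        intro v hv
        have hv' := hvertsFin.mem_toFinset.1 hv
        rw [htight v hv', Finset.card_image_of_injective _ (hFv v hv').1]
        simp
      dual := by
        intro v hv F hF h0 F' hF' h0'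
        have hv' : IsFaceOf P {v} := hvertsFin.mem_toFinset.1 hv
        have h1 : F ∈ hfacetsFin.toFinset.filter
            (fun F => v ⬝ᵥ (fun i => (u F i : ℝ)) + (lam F : ℝ) = 0) :=
          Finset.mem_filter.2 ⟨hF, h0⟩
        have h2 : F' ∈ hfacetsFin.toFinset.filter
            (fun F => v ⬝ᵥ (fun i => (u F i : ℝ)) + (lam F : ℝ) = 0) :=
          Finset.mem_filter.2 ⟨hF', h0'⟩
        rw [htight v hv', Finset.mem_image] at h1 h2
        obtain ⟨j, -, rfl⟩ := h1
        obtain ⟨j', -, rfl⟩ := h2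
        rw [hMx v hv' j]
        have := hm v hv' j j'
        simpa [dotProduct, (hFv v hv').1.eq_iff] using this
      expand := by
        intro v hv y
        have hv' : IsFaceOf P {v} := hvertsFin.mem_toFinset.1 hv
        rw [htight v hv', Finset.sum_image fun _ _ _ _ h => (hFv v hv').1 h]
        conv_lhs => rw [dual_expand (fun j i => (u (Fv v j) i : ℝ)) (m v) (hm v hv') (y - v)]
        refine Finset.sum_congr rfl fun j _ => ?_
        rw [hMx v hv' j]
        congr 1
        have h0 := hzero v hv' j
        have h1 : ∑ i, (y - v) i * (u (Fv v j) i : ℝ)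
            = (y - v) ⬝ᵥ fun i => (u (Fv v j) i : ℝ) := rfl
        rw [h1, sub_dotProduct]
        linarith
      extreme := by
        intro x hx
        have := isFaceOf_of_extreme _ _ _ hx
        rw [← hbody] at this
        exact hvertsFin.mem_toFinset.2 this }
  have hDbody : D.body = P := hbody.symm
  have hDtight : ∀ x, IsFaceOf P {x} → D.tight x = Finset.univ.image (Fv x) := htight
  have hverts : ∀ x, x ∈ D.verts ↔ IsFaceOf P {x} := fun x => hvertsFin.mem_toFinset
  -- the vertex term as a function of `z`
  let term : (Fin n → ℝ) → (Fin n → ℂ) → ℂ := fun x z =>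
    Complex.exp (cpair x z) / (Nat.card ((Fin n → ℤ) ⧸ normalLattice u Fv x) : ℂ) *
      ∑ᶠ γ : (Fin n → ℤ) ⧸ normalLattice u Fv x,
        ∏ j : Fin n, (1 - chi u Fv m x γ j * Complex.exp (cpair (m x j) z))⁻¹
  rw [finsum_mem_eq_finite_toFinset_sum _ hLfin, finsum_mem_eq_finite_toFinset_sum _ hvertsFin]
  change _ = ∑ x ∈ D.verts, term x z
  -- the formula off the walls, where all the expansions converge
  have hgeneric : ∀ z : Fin n → ℂ, D.Generic (fun i => (z i).re) →
      ∑ y ∈ hLfin.toFinset, Complex.exp (cpair (intVec y) z) = ∑ x ∈ D.verts, term x z := by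
    intro z hgen
    have h1 : ∀ x ∈ D.verts, HasSum (fun y : Fin n → ℤ =>
        (∏ F ∈ D.tight x, flipCoeff (0 < D.M x F ⬝ᵥ fun i => (z i).re) (D.a F (intVec y)))
          * Complex.exp (cpair (intVec y) z)) (term x z) := by
      intro x hx
      have hx' := (hverts x).1 hx
      have hxint : x ∈ intVec '' (S : Set (Fin n → ℤ)) := by
        have h2 := isExtreme_singleton.1 (IsFaceOf.isExposed hx').isExtreme
        rw [hP] at h2
        exact extremePoints_convexHull_subset h2
      obtain ⟨v, -, rfl⟩ := hxint
      have h3 := vertex_hasSum (fun j => u (Fv (intVec v) j)) (m (intVec v)) (hm _ hx') z (by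
        intro j
        rw [cpair_re, ← hMx _ hx' j]
        refine hgen _ hx _ ?_
        rw [hDtight _ hx']
        exact Finset.mem_image_of_mem _ (Finset.mem_univ j)) v
      refine hasSum_of_eq h3 (fun y => ?_) rfl
      rw [hDtight _ hx', Finset.prod_image fun _ _ _ _ h => (hFv _ hx').1 h]
      congr 1
      refine Finset.prod_congr rfl fun j _ => ?_
      have h4 : D.M (intVec v) (Fv (intVec v) j) = m (intVec v) j := hMx _ hx' j
      have h5 : D.a (Fv (intVec v) j) (intVec y)
          = ∑ i, (intVec y i - intVec v i) * (u (Fv (intVec v) j) i : ℝ) := by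
        have h0 := hzero _ hx' j
        have h6 : ∑ i, (intVec y i - intVec v i) * (u (Fv (intVec v) j) i : ℝ)
            = (intVec y - intVec v) ⬝ᵥ fun i => (u (Fv (intVec v) j) i : ℝ) := rfl
        have h7 : D.a (Fv (intVec v) j) (intVec y)
            = intVec y ⬝ᵥ (fun i => (u (Fv (intVec v) j) i : ℝ)) + (lam (Fv (intVec v) j) : ℝ) :=
          rfl
        rw [h6, h7, sub_dotProduct]
        linarith
      rw [h4, h5, cpair_re]
    have h2 := hasSum_sum h1
    have h3 : HasSum (fun y : Fin n → ℤ => ∑ x ∈ D.verts,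
        (∏ F ∈ D.tight x, flipCoeff (0 < D.M x F ⬝ᵥ fun i => (z i).re) (D.a F (intVec y)))
          * Complex.exp (cpair (intVec y) z))
        (∑ y ∈ hLfin.toFinset, Complex.exp (cpair (intVec y) z)) := by
      have hval : ∀ y : Fin n → ℤ, ∑ x ∈ D.verts,
          (∏ F ∈ D.tight x, flipCoeff (0 < D.M x F ⬝ᵥ fun i => (z i).re) (D.a F (intVec y)))
            * Complex.exp (cpair (intVec y) z)
          = if y ∈ hLfin.toFinset then Complex.exp (cpair (intVec y) z) else 0 := by
        intro y
        rw [← Finset.sum_mul]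
        have h4 := D.signedCount_eq_indicator hgen (intVec y)
        rw [SimpleData.signedCount, hDbody] at h4
        rw [h4]
        simp
      refine hasSum_of_eq (hasSum_sum_of_ne_finset_zero (s := hLfin.toFinset)
        (f := fun y => if y ∈ hLfin.toFinset then Complex.exp (cpair (intVec y) z) else 0)
        (fun y hy => if_neg hy)) hval ?_
      exact Finset.sum_congr rfl fun y hy => (if_pos hy).symm
    exact h3.unique h2
  -- both sides are continuous along `z + t ζ`, and the walls are left immediately
  obtain ⟨ζ, hζ⟩ := D.exists_generic
  let zt : ℝ → Fin n → ℂ := fun t i => z i + (t : ℂ) * (ζ i : ℂ)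
  have hz0 : zt 0 = z := by
    funext i
    simp [zt]
  have hcp : ∀ x : Fin n → ℝ, Continuous fun t => Complex.exp (cpair x (zt t)) := by
    intro x
    simp only [cpair, zt]
    fun_prop
  have hev : ∀ᶠ t in nhdsWithin (0 : ℝ) {0}ᶜ,
      ∑ y ∈ hLfin.toFinset, Complex.exp (cpair (intVec y) (zt t))
        = ∑ x ∈ D.verts, term x (zt t) := by
    filter_upwards [D.generic_perturb hζ (fun i => (z i).re)] with t ht
    refine hgeneric _ ?_
    convert ht using 2 with i
    simp [zt]
  have hL : Filter.Tendsto (fun t => ∑ y ∈ hLfin.toFinset, Complex.exp (cpair (intVec y) (zt t)))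
      (nhdsWithin (0 : ℝ) {0}ᶜ)
      (nhds (∑ y ∈ hLfin.toFinset, Complex.exp (cpair (intVec y) z))) := by
    have h1 : Continuous fun t =>
        ∑ y ∈ hLfin.toFinset, Complex.exp (cpair (intVec y) (zt t)) :=
      continuous_finsetSum _ fun y _ => hcp _
    have h2 := h1.tendsto 0
    rw [hz0] at h2
    exact h2.mono_left nhdsWithin_le_nhds
  have hR : Filter.Tendsto (fun t => ∑ x ∈ D.verts, term x (zt t))
      (nhdsWithin (0 : ℝ) {0}ᶜ) (nhds (∑ x ∈ D.verts, term x z)) := by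
    refine tendsto_finsetSum _ fun x hx => ?_
    have hx' := (hverts x).1 hx
    have hfin : Finite ((Fin n → ℤ) ⧸ normalLattice u Fv x) :=
      finite_quotient (fun j => u (Fv x j)) (m x) (hm x hx')
    have := Fintype.ofFinite ((Fin n → ℤ) ⧸ normalLattice u Fv x)
    have h1 : ContinuousAt (fun t => term x (zt t)) 0 := by
      simp only [term, finsum_eq_sum_of_fintype]
      refine ((hcp x).continuousAt.div_const _).mul ?_
      refine tendsto_finsetSum _ fun γ _ => tendsto_finsetProd _ fun j _ => ?_
      refine ContinuousAt.inv₀ (f := fun t : ℝ =>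
        1 - chi u Fv m x γ j * Complex.exp (cpair (m x j) (zt t))) ?_ ?_
      · exact continuousAt_const.sub (continuousAt_const.mul (hcp _).continuousAt)
      · rw [hz0]
        exact sub_ne_zero.2 (hz x hx' γ j).symm
    have h2 : Filter.Tendsto (fun t => term x (zt t)) (nhds 0) (nhds (term x (zt 0))) := h1
    rw [hz0] at h2
    exact h2.mono_left nhdsWithin_le_nhds
  exact tendsto_nhds_unique (hL.congr' hev) hR
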